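/- arXiv:1410.3247 — 2 statements merged into one kernel-verified Lean document; each statement's English description precedes it below -/
import Mathlib

section
/- Let (P, A_1,…,A_n) be a regular poset of width w, and suppose L ⊆ P induces a (2w+1)-ladder in P with lower leg x_1,…,x_{2w+1} and upper leg y_1,…,y_{2w+1}. Then A(y_1) ⊑ A(x_{2w+1}). -/
/-- `S` is an antichain with respect to the order relation `le`. -/
def IsAntichainOn {α : Type*} (le : α → α → Prop) (S : Finset α) : Prop :=
  ∀ a ∈ S, ∀ b ∈ S, a ≠ b → ¬ le a b ∧ ¬ le b a

/-- The poset `(α, le)` has width `w`: there is an antichain of size `w`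
and every antichain has size at most `w`. -/
def IsWidth {α : Type*} (le : α → α → Prop) (w : ℕ) : Prop :=
  (∃ S : Finset α, IsAntichainOn le S ∧ S.card = w) ∧
    ∀ S : Finset α, IsAntichainOn le S → S.card ≤ w

/-- `g` is an `n`-Grundy coloring of the poset `(α, le)`:
`g` takes values in `{1,…,n}`, is surjective onto `{1,…,n}`,
each color class is a chain (G1), and each vertex of color `j`
has an incomparable witness of every smaller color (G3). -/
def IsGrundy {α : Type*} (le : α → α → Prop) (n : ℕ) (g : α → ℕ) : Prop :=
  (∀ v, 1 ≤ g v ∧ g v ≤ n) ∧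
  (∀ i, 1 ≤ i → i ≤ n → ∃ v, g v = i) ∧
  (∀ u v, g u = g v → le u v ∨ le v u) ∧
  (∀ v i, 1 ≤ i → i < g v → ∃ u, (¬ le u v ∧ ¬ le v u) ∧ g u = i)

/-- `c` is the First-Fit chain partition of the poset `(α, le)` presented in the
strict total order `prec`: every vertex `v` gets the least color `c v ≥ 1` such
that all `prec`-earlier vertices of the same color are comparable to `v`. -/
def IsFFColoring {α : Type*} (le prec : α → α → Prop) (c : α → ℕ) : Prop :=
  ∀ v, 1 ≤ c v ∧
    (∀ u, prec u v → c u = c v → le u v ∨ le v u) ∧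
    (∀ j, 1 ≤ j → j < c v → ∃ u, prec u v ∧ c u = j ∧ ¬ le u v ∧ ¬ le v u)

/-- The sequences `x` (lower leg) and `y` (upper leg) form an induced copy of
the `m`-ladder `L_m` in the poset `(α, le)`. -/
def IsLadderIn {α : Type*} (le : α → α → Prop) {m : ℕ} (x y : Fin m → α) : Prop :=
  (∀ i j : Fin m, i < j → le (x i) (x j) ∧ x i ≠ x j) ∧
  (∀ i j : Fin m, i < j → le (y i) (y j) ∧ y i ≠ y j) ∧
  (∀ i : Fin m, le (x i) (y i) ∧ x i ≠ y i) ∧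
  (∀ i j : Fin m, i < j → ¬ le (y i) (x j) ∧ ¬ le (x j) (y i))

/-- The poset `(α, le)` contains no induced copy of the `m`-ladder `L_m`. -/
def LFree {α : Type*} (le : α → α → Prop) (m : ℕ) : Prop :=
  ¬ ∃ x y : Fin m → α, IsLadderIn le x y

/-- `A ⊑ B`: every element of `A` is `le`-below some element of `B`. -/
def Below {α : Type*} (le : α → α → Prop) (A B : Finset α) : Prop :=
  ∀ a ∈ A, ∃ b ∈ B, le a b

/-- `A ⊏ B`: `A ⊑ B` and `A ≠ B`. -/
def StrictBelow {α : Type*} (le : α → α → Prop) (A B : Finset α) : Prop :=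
  Below le A B ∧ A ≠ B

/-- The bipartite poset induced by antichains `A` and `B` (with `A` below `B`)
is a core: `|A| = |B|` and every comparable pair `x ≤ y` with `x ∈ A`, `y ∈ B`
is a Dilworth edge, i.e. belongs to a perfect matching of comparable pairs. -/
def IsCore {α : Type*} (le : α → α → Prop) (A B : Finset α) : Prop :=
  A.card = B.card ∧
    ∀ x ∈ A, ∀ y ∈ B, le x y →
      ∃ f : α → α, Set.BijOn f ↑A ↑B ∧ (∀ a ∈ A, le a (f a)) ∧ f x = y

/-- `A j = A_{s(i)}`: among the antichains presented before `A i`, it is the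
`⊑`-least one strictly above `A i`. -/
def IsSuccIdx {α : Type*} (le : α → α → Prop) {n : ℕ} (A : Fin n → Finset α)
    (i j : Fin n) : Prop :=
  j < i ∧ StrictBelow le (A i) (A j) ∧
    ∀ k : Fin n, k < i → StrictBelow le (A i) (A k) → Below le (A j) (A k)

/-- `A j = A_{p(i)}`: among the antichains presented before `A i`, it is the
`⊑`-greatest one strictly below `A i`. -/
def IsPredIdx {α : Type*} (le : α → α → Prop) {n : ℕ} (A : Fin n → Finset α)
    (i j : Fin n) : Prop :=
  j < i ∧ StrictBelow le (A j) (A i) ∧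
    ∀ k : Fin n, k < i → StrictBelow le (A k) (A i) → Below le (A k) (A j)

/-- `(P, A_1, …, A_n)` is a regular poset of width `w`: the `A i` are pairwise
disjoint maximum antichains (each of size `w`, the width of `P`) covering `P`,
linearly ordered by `⊑`; consecutive-at-presentation-time pairs induce cores
(R4); and every comparability with an earlier antichain factors through the
`⊑`-neighbors at presentation time (R5). -/
def IsRegularPoset {α : Type*} (le : α → α → Prop) (w : ℕ) {n : ℕ}
    (A : Fin n → Finset α) : Prop :=
  (∀ v : α, ∃ i, v ∈ A i) ∧
  (∀ i j : Fin n, i ≠ j → ∀ v ∈ A i, v ∉ A j) ∧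
  (∀ i, IsAntichainOn le (A i)) ∧
  (∀ i, (A i).card = w) ∧
  IsWidth le w ∧
  (∀ i j : Fin n, Below le (A i) (A j) ∨ Below le (A j) (A i)) ∧
  (∀ i j : Fin n, IsSuccIdx le A i j → IsCore le (A i) (A j)) ∧
  (∀ i j : Fin n, IsPredIdx le A i j → IsCore le (A j) (A i)) ∧
  (∀ (i j : Fin n) (x y : α), x ∈ A i → y ∈ A j → le x y → x ≠ y →
    (j < i → ∃ k, IsSuccIdx le A i k ∧ ∃ z ∈ A k, le x z ∧ x ≠ z ∧ le z y) ∧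
    (i < j → ∃ k, IsPredIdx le A j k ∧ ∃ z ∈ A k, le x z ∧ le z y ∧ z ≠ y))

/-- `x` is an ascending chain: increasing both in the poset and in color. -/
def IsAscending {α : Type*} (le : α → α → Prop) (g : α → ℕ) {k : ℕ}
    (x : Fin k → α) : Prop :=
  ∀ i j : Fin k, i < j → (le (x i) (x j) ∧ x i ≠ x j) ∧ g (x i) < g (x j)

/-- `x` is a descending chain: decreasing in the poset, increasing in color. -/
def IsDescending {α : Type*} (le : α → α → Prop) (g : α → ℕ) {k : ℕ}
    (x : Fin k → α) : Prop :=
  ∀ i j : Fin k, i < j → (le (x j) (x i) ∧ x i ≠ x j) ∧ g (x i) < g (x j)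

/-- The order of the lexicographic product `P · Q`. -/
def LexLe {α β : Type*} (leP : α → α → Prop) (leQ : β → β → Prop) :
    α × β → α × β → Prop :=
  fun a b => (leP a.1 b.1 ∧ a.1 ≠ b.1) ∨ (a.1 = b.1 ∧ leQ a.2 b.2)
/-!
Suppose `A(y_i) ⋢ A(x_j)` although `i + 2w ≤ j`. Let `A_g` be the first presented antichain of the
`⊑`-interval from `A(x_m)` to `A(y_m)`, where `m = i + w` is the middle rung. A comparability
`u ≤ v` passes through an element of `A_g` as soon as `A_g` is the first presented antichain of
`[A(u), A_g]` or of `[A_g, A(v)]`: keep replacing the later presented of `u` and `v` by the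
neighbor through which `u ≤ v` factors. If `A_g ⊑ A(x_j)`, this applies to the `w + 1` rungs
`i, …, m`, and otherwise to the `w + 1` rungs `m, …, j`. But distinct rungs pass through distinct
elements, and `A_g` has only `w` of them.
-/

section Order

variable {α : Type*} {le : α → α → Prop}

theorem Below.refl [Std.Refl le] (S : Finset α) : Below le S S :=
  fun a ha => ⟨a, ha, refl_of le a⟩

theorem Below.trans [IsTrans α le] {S T U : Finset α} (hST : Below le S T) (hTU : Below le T U) :
    Below le S U := by
  intro a ha
  obtain ⟨b, hb, hab⟩ := hST a ha
  obtain ⟨c, hc, hbc⟩ := hTU b hb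
  exact ⟨c, hc, trans_of le hab hbc⟩

theorem IsAntichainOn.eq_of_le {S : Finset α} (hS : IsAntichainOn le S) {a b : α} (ha : a ∈ S)
    (hb : b ∈ S) (hab : le a b) : a = b :=
  by_contra fun hne => (hS a ha b hb hne).1 hab

theorem IsAntichainOn.mem_of_le_of_below [IsTrans α le] [Std.Antisymm le] {S T : Finset α}
    (hS : IsAntichainOn le S) (hTS : Below le T S) {u v : α} (hu : u ∈ S) (hv : v ∈ T)
    (huv : le u v) : u ∈ T := by
  obtain ⟨z, hz, hvz⟩ := hTS v hv
  obtain rfl : u = z := hS.eq_of_le hu hz (trans_of le huv hvz)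
  rwa [antisymm_of le huv hvz]

end Order

namespace IsLadderIn

variable {α : Type*} {le : α → α → Prop} {m : ℕ} {x y : Fin m → α}

theorem lower_le [Std.Refl le] (h : IsLadderIn le x y) {i j : Fin m} (hij : i ≤ j) :
    le (x i) (x j) := by
  obtain rfl | hlt := hij.eq_or_lt
  · exact refl_of le (x i)
  · exact (h.1 i j hlt).1

theorem upper_le [Std.Refl le] (h : IsLadderIn le x y) {i j : Fin m} (hij : i ≤ j) :
    le (y i) (y j) := by
  obtain rfl | hlt := hij.eq_or_lt
  · exact refl_of le (y i)
  · exact (h.2.1 i j hlt).1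

theorem rung_le (h : IsLadderIn le x y) (i : Fin m) : le (x i) (y i) :=
  (h.2.2.1 i).1

theorem eq_of_common_mem_rung [IsTrans α le] (h : IsLadderIn le x y) {z : α} {i j : Fin m}
    (hxi : le (x i) z) (hyi : le z (y i)) (hxj : le (x j) z) (hyj : le z (y j)) : i = j := by
  by_contra hne
  obtain hlt | hlt := lt_or_gt_of_ne hne
  · exact (h.2.2.2 i j hlt).2 (trans_of le hxj hyi)
  · exact (h.2.2.2 j i hlt).2 (trans_of le hxi hyj)

theorem card_le_of_rungs_meet [IsTrans α le] (h : IsLadderIn le x y) {I : Finset (Fin m)}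
    {B : Finset α} (hI : ∀ i ∈ I, ∃ z ∈ B, le (x i) z ∧ le z (y i)) : I.card ≤ B.card := by
  refine Finset.card_le_card_of_forall_subsingleton (fun i z => le (x i) z ∧ le z (y i)) hI ?_
  rintro z - i ⟨-, hxi, hyi⟩ j ⟨-, hxj, hyj⟩
  exact h.eq_of_common_mem_rung hxi hyi hxj hyj

end IsLadderIn

/-- The part of a regular poset that concerns comparabilities only: antichains `A_1, …, A_n`, of any
sizes, partition the poset, are linearly ordered by `⊑`, and every comparability factors through a
`⊑`-neighbor of its later presented end at the time of presentation. -/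
structure IsFactoringPresentation {α : Type*} (le : α → α → Prop) {n : ℕ}
    (A : Fin n → Finset α) : Prop where
  exists_mem : ∀ v, ∃ i, v ∈ A i
  index_unique : ∀ {i j v}, v ∈ A i → v ∈ A j → i = j
  isAntichainOn : ∀ i, IsAntichainOn le (A i)
  below_total : ∀ i j, Below le (A i) (A j) ∨ Below le (A j) (A i)
  factor_succ : ∀ {i j u v}, u ∈ A i → v ∈ A j → le u v → j < i →
    ∃ k, IsSuccIdx le A i k ∧ ∃ z ∈ A k, le u z ∧ le z v
  factor_pred : ∀ {i j u v}, u ∈ A i → v ∈ A j → le u v → i < j →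
    ∃ k, IsPredIdx le A j k ∧ ∃ z ∈ A k, le u z ∧ le z v

/-- The indices of the antichains in the `⊑`-interval `[A i, A j]`. The order on these indices
is the order of presentation, so a least element is the antichain presented first. -/
def indexInterval {α : Type*} (le : α → α → Prop) {n : ℕ} (A : Fin n → Finset α) (i j : Fin n) :
    Set (Fin n) :=
  {k | Below le (A i) (A k) ∧ Below le (A k) (A j)}

theorem indexInterval_subset {α : Type*} {le : α → α → Prop} [IsTrans α le] {n : ℕ}
    {A : Fin n → Finset α} {i j c d : Fin n} (hci : Below le (A c) (A i))
    (hjd : Below le (A j) (A d)) : indexInterval le A i j ⊆ indexInterval le A c d :=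
  fun _ hk => ⟨hci.trans hk.1, hk.2.trans hjd⟩

theorem IsRegularPoset.isFactoringPresentation {α : Type*} {le : α → α → Prop} {w n : ℕ}
    {A : Fin n → Finset α} (h : IsRegularPoset le w A) : IsFactoringPresentation le A := by
  obtain ⟨hcover, hdisj, hanti, -, -, htotal, -, -, hfactor⟩ := h
  have hunique {i j v} (hi : v ∈ A i) (hj : v ∈ A j) : i = j :=
    by_contra fun hne => hdisj i j hne v hi hj
  have hne {i j u v} (hu : u ∈ A i) (hv : v ∈ A j) (hij : i ≠ j) : u ≠ v := by
    rintro rfl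
    exact hij (hunique hu hv)
  refine ⟨hcover, hunique, hanti, htotal, fun {i j u v} hu hv huv hji => ?_,
    fun {i j u v} hu hv huv hij => ?_⟩
  · obtain ⟨k, hk, z, hz, huz, -, hzv⟩ := (hfactor i j u v hu hv huv (hne hu hv hji.ne')).1 hji
    exact ⟨k, hk, z, hz, huz, hzv⟩
  · obtain ⟨k, hk, z, hz, huz, hzv, -⟩ := (hfactor i j u v hu hv huv (hne hu hv hij.ne)).2 hij
    exact ⟨k, hk, z, hz, huz, hzv⟩

namespace IsFactoringPresentation

variable {α : Type*} {le : α → α → Prop} {n : ℕ} {A : Fin n → Finset α}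

theorem strictBelow (hA : IsFactoringPresentation le A) {i j : Fin n} {u : α}
    (hu : u ∈ A i ∨ u ∈ A j) (hij : i ≠ j) (h : Below le (A i) (A j)) :
    StrictBelow le (A i) (A j) := by
  refine ⟨h, fun hA_eq => hij ?_⟩
  simp only [hA_eq, or_self] at hu
  exact hA.index_unique (hA_eq ▸ hu) hu

variable [IsPartialOrder α le]

theorem eq_of_le_of_below (hA : IsFactoringPresentation le A) {i j : Fin n} {u v : α}
    (hu : u ∈ A i) (hv : v ∈ A j) (huv : le u v) (hji : Below le (A j) (A i)) : i = j :=
  hA.index_unique hu ((hA.isAntichainOn i).mem_of_le_of_below hji hu hv huv)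

theorem below_of_le (hA : IsFactoringPresentation le A) {i j : Fin n} {u v : α} (hu : u ∈ A i)
    (hv : v ∈ A j) (huv : le u v) : Below le (A i) (A j) := by
  obtain hij | hji := hA.below_total i j
  · exact hij
  · rw [hA.eq_of_le_of_below hu hv huv hji]
    exact .refl _

theorem exists_mem_between (hA : IsFactoringPresentation le A) {g i j : Fin n} {u v : α}
    (hu : u ∈ A i) (hv : v ∈ A j) (huv : le u v) (hg : g ∈ indexInterval le A i j)
    (hfirst : g ∈ lowerBounds (indexInterval le A g j) ∨
      g ∈ lowerBounds (indexInterval le A i g)) :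
    ∃ z ∈ A g, le u z ∧ le z v := by
  induction hN : (i : ℕ) + j using Nat.strong_induction_on generalizing i j u v with | _ N ih
  subst hN
  obtain rfl | hig := eq_or_ne i g
  · exact ⟨u, hu, refl_of le u, huv⟩
  obtain rfl | hgj := eq_or_ne g j
  · exact ⟨v, hv, huv, refl_of le v⟩
  have hg_le : g ≤ j ∨ g ≤ i :=
    hfirst.imp (fun h => h ⟨hg.2, .refl _⟩) (fun h => h ⟨.refl _, hg.1⟩)
  obtain hij | rfl | hji := lt_trichotomy i j
  · have hgj_lt : g < j := hg_le.elim (fun h => h.lt_of_ne hgj) (fun h => h.trans_lt hij)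
    obtain ⟨k, ⟨hkj, hkj_below, hk_max⟩, z, hz, huz, hzv⟩ := hA.factor_pred hu hv huv hij
    have hgk := hk_max g hgj_lt (hA.strictBelow (.inr hv) hgj hg.2)
    obtain ⟨t, ht, hut, htz⟩ := ih _ (Nat.add_lt_add_left hkj i) hu hz huz ⟨hg.1, hgk⟩
      (hfirst.imp_left fun h =>
        lowerBounds_mono_set (indexInterval_subset (.refl _) hkj_below.1) h) rfl
    exact ⟨t, ht, hut, trans_of le htz hzv⟩
  · obtain ⟨z, hz, huz⟩ := hg.1 u hu
    exact absurd (hA.eq_of_le_of_below hu hz huz hg.2) hig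
  · have hgi_lt : g < i := hg_le.elim (fun h => h.trans_lt hji) (fun h => h.lt_of_ne hig.symm)
    obtain ⟨k, ⟨hki, hik_below, hk_min⟩, z, hz, huz, hzv⟩ := hA.factor_succ hu hv huv hji
    have hkg := hk_min g hgi_lt (hA.strictBelow (.inl hu) hig hg.1)
    obtain ⟨t, ht, hzt, htv⟩ := ih _ (Nat.add_lt_add_right hki j) hz hv hzv ⟨hkg, hg.2⟩
      (hfirst.imp_right fun h =>
        lowerBounds_mono_set (indexInterval_subset hik_below.1 (.refl _)) h) rfl
    exact ⟨t, ht, trans_of le huz hzt, htv⟩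

theorem exists_mem_rung_of_le (hA : IsFactoringPresentation le A) {m : ℕ} {x y : Fin m → α}
    (hlad : IsLadderIn le x y) {p q : Fin m} (hqp : q ≤ p) {c d g e : Fin n} (hc : x p ∈ A c)
    (hd : y p ∈ A d) (hg : IsLeast (indexInterval le A c d) g) (he : y q ∈ A e)
    (hge : Below le (A g) (A e)) : ∃ z ∈ A g, le (x q) z ∧ le z (y q) := by
  obtain ⟨f, hf⟩ := hA.exists_mem (x q)
  have hfc := hA.below_of_le hf hc (hlad.lower_le hqp)
  have hed := hA.below_of_le he hd (hlad.upper_le hqp)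
  exact hA.exists_mem_between hf he (hlad.rung_le q) ⟨hfc.trans hg.1.1, hge⟩ <|
    .inl <| lowerBounds_mono_set (indexInterval_subset hg.1.1 hed) hg.2

theorem exists_mem_rung_of_ge (hA : IsFactoringPresentation le A) {m : ℕ} {x y : Fin m → α}
    (hlad : IsLadderIn le x y) {p q : Fin m} (hpq : p ≤ q) {c d g f : Fin n} (hc : x p ∈ A c)
    (hd : y p ∈ A d) (hg : IsLeast (indexInterval le A c d) g) (hf : x q ∈ A f)
    (hfg : Below le (A f) (A g)) : ∃ z ∈ A g, le (x q) z ∧ le z (y q) := by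
  obtain ⟨e, he⟩ := hA.exists_mem (y q)
  have hcf := hA.below_of_le hc hf (hlad.lower_le hpq)
  have hde := hA.below_of_le hd he (hlad.upper_le hpq)
  exact hA.exists_mem_between hf he (hlad.rung_le q) ⟨hfg, hg.1.2.trans hde⟩ <|
    .inr <| lowerBounds_mono_set (indexInterval_subset hcf hg.1.2) hg.2

end IsFactoringPresentation

theorem stmt_6_general {α : Type*} {le : α → α → Prop} [IsPartialOrder α le] {n : ℕ}
    {A : Fin n → Finset α} (hA : IsFactoringPresentation le A) {w : ℕ}
    (hw : ∀ k, (A k).card ≤ w) {m : ℕ} {x y : Fin m → α} (hlad : IsLadderIn le x y) {i j : Fin m}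
    (hij : (i : ℕ) + 2 * w ≤ j) {a b : Fin n} (ha : y i ∈ A a) (hb : x j ∈ A b) :
    Below le (A a) (A b) := by
  refine (hA.below_total a b).resolve_right fun hba => ?_
  let p : Fin m := ⟨i + w, by omega⟩
  have hip : i ≤ p := Fin.le_def.2 (Nat.le_add_right i w)
  have hpj : p ≤ j := Fin.le_def.2 (show (i : ℕ) + w ≤ j by omega)
  have hxb {q c} (hqj : q ≤ j) (hc : x q ∈ A c) : Below le (A c) (A b) :=
    hA.below_of_le hc hb (hlad.lower_le hqj)
  have hby {q d} (hiq : i ≤ q) (hd : y q ∈ A d) : Below le (A b) (A d) :=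
    hba.trans (hA.below_of_le ha hd (hlad.upper_le hiq))
  obtain ⟨c, hc⟩ := hA.exists_mem (x p)
  obtain ⟨d, hd⟩ := hA.exists_mem (y p)
  obtain ⟨g, hg⟩ : ∃ g, IsLeast (indexInterval le A c d) g :=
    (exists_minimal_of_wellFoundedLT (· ∈ indexInterval le A c d)
      ⟨b, hxb hpj hc, hby hip hd⟩).imp fun _ => minimal_iff_isLeast.1
  obtain hgb | hbg := hA.below_total g b
  · have hcard : (Finset.Icc i p).card ≤ (A g).card := hlad.card_le_of_rungs_meet fun q hq => by
      obtain ⟨hiq, hqp⟩ := Finset.mem_Icc.1 hq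
      obtain ⟨e, he⟩ := hA.exists_mem (y q)
      exact hA.exists_mem_rung_of_le hlad hqp hc hd hg he (hgb.trans (hby hiq he))
    have hcard_le := hw g
    simp only [Fin.card_Icc, p] at hcard
    omega
  · have hcard : (Finset.Icc p j).card ≤ (A g).card := hlad.card_le_of_rungs_meet fun q hq => by
      obtain ⟨hpq, hqj⟩ := Finset.mem_Icc.1 hq
      obtain ⟨f, hf⟩ := hA.exists_mem (x q)
      exact hA.exists_mem_rung_of_ge hlad hpq hc hd hg hf ((hxb hqj hf).trans hbg)
    have hcard_le := hw g
    simp only [Fin.card_Icc, p] at hcard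
    omega

/-- For a `(2w+1)`-ladder induced in a regular poset of width `w`
with lower leg `x` and upper leg `y`, one has `A(y 1) ⊑ A(x (2w+1))`. -/
theorem stmt_6 {α : Type} [Fintype α] (le : α → α → Prop)
    (hle : IsPartialOrder α le) (w : ℕ) {n : ℕ} (A : Fin n → Finset α)
    (hreg : IsRegularPoset le w A)
    (x y : Fin (2 * w + 1) → α) (hlad : IsLadderIn le x y)
    (a b : Fin n) (ha : y ⟨0, by omega⟩ ∈ A a)
    (hb : x ⟨2 * w, by omega⟩ ∈ A b) :
    Below le (A a) (A b) := by
  exact stmt_6_general hreg.isFactoringPresentation (fun k => (hreg.2.2.2.1 k).le)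
    hlad (by simp) ha hb
end

section
/- Let m ≥ 2, let w ≥ 2, and let P be a finite L_m-free poset of width w admitting an n-Grundy coloring. Then there exist a finite L_m-free poset of width at most ⌊w/2⌋ admitting an n₁-Grundy coloring and a finite L_m-free poset of width at most w−1 admitting an n₂-Grundy coloring such that n ≤ m²·w⁴·n₁ + n₂. -/
/-! A Grundy coloring restricted to an order-convex set `S` fails to be Grundy only because of
pairs of colors `i < j` such that some element of `S` of color `j` lies above (or below) all the
elements of `S` of color `i`. A chain of `k + 1` colors in this relation produces a ladder of
length `k` whose upper leg need not be a chain, and hence `k ≤ (m - 1) w` in an `L_m`-free poset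
of width `w`. By Mirsky's theorem, `S` therefore contains a Grundy colored subposet using at least
a fraction `((m - 1) w + 1)⁻²` of its colors.

Let `v` have the largest color, so that the elements incomparable to `v` meet every other color
and have width at most `w - 1`. If `i` is dominated by `j` among them, as witnessed by `x`, then
the color `i` occurs in `{z ∥ x, v ≤ z}` and `j` occurs in `{z ∥ v, x ≤ z}`. These convex sets are
completely incomparable, so one of them has width at most `w / 2`. The first set increases and the
second decreases with `x`, so at most `2 (w - 1)` of them carry all the conflicting colors; deleting
these colors, and those coming from the dual argument, leaves a Grundy coloring of a set of width
at most `w - 1`. -/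

open Set OrderDual

variable {α β γ ι : Type*} {m w : ℕ}

section Mirsky

theorem exists_isAntichain_card_le_mul (r : ι → ι → Prop) [IsTrans ι r] {M : ℕ} (K : Finset ι)
    (hK : ∀ l : List ι, (∀ a ∈ l, a ∈ K) → l.Pairwise r → l.length ≤ M) :
    ∃ A ⊆ K, IsAntichain r (A : Set ι) ∧ K.card ≤ M * A.card := by
  classical
  induction M generalizing K with
  | zero =>
    have hK_empty : K = ∅ := Finset.eq_empty_of_forall_notMem fun a ha => by
      simpa using hK [a] (by simpa using ha) (List.pairwise_singleton r a)
    exact ⟨∅, Finset.empty_subset K, by simp, by simp [hK_empty]⟩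
  | succ M ih =>
    let minimals := K.filter fun a => ∀ b ∈ K, ¬ r b a
    let rest := K.filter fun a => ¬ ∀ b ∈ K, ¬ r b a
    have hrest : ∀ l : List ι, (∀ a ∈ l, a ∈ rest) → l.Pairwise r → l.length ≤ M := by
      rintro (_ | ⟨a, l⟩) hmem hl
      · exact Nat.zero_le M
      · obtain ⟨-, ha⟩ := Finset.mem_filter.1 (hmem a List.mem_cons_self)
        push Not at ha
        obtain ⟨b, hb, hba⟩ := ha
        have hbl : ∀ c ∈ a :: l, r b c :=
          List.forall_mem_cons.2
            ⟨hba, fun c hc => _root_.trans hba (List.rel_of_pairwise_cons hl hc)⟩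
        exact Nat.le_of_succ_le_succ <| hK (b :: a :: l)
          (List.forall_mem_cons.2 ⟨hb, fun c hc => Finset.mem_of_mem_filter c (hmem c hc)⟩)
          (List.pairwise_cons.2 ⟨hbl, hl⟩)
    obtain ⟨A, hA, hA_anti, hA_card⟩ := ih rest hrest
    have hcard : minimals.card + rest.card = K.card := Finset.card_filter_add_card_filter_not _
    rcases le_total minimals.card A.card with hle | hle
    · exact ⟨A, hA.trans (Finset.filter_subset _ _), hA_anti, by linarith⟩
    · have hmin_anti : IsAntichain r (minimals : Set ι) := fun a ha b hb _ =>
        (Finset.mem_filter.1 hb).2 a (Finset.mem_of_mem_filter a ha)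
      exact ⟨minimals, Finset.filter_subset _ _, hmin_anti,
        by linarith [Nat.mul_le_mul_left M hle]⟩

end Mirsky

section Width

/-- Every antichain contained in the subset `S` of the poset `α` has at most `w` elements. -/
def WidthLE [LE α] (S : Set α) (w : ℕ) : Prop :=
  ∀ A : Finset α, ↑A ⊆ S → IsAntichain (· ≤ ·) (A : Set α) → A.card ≤ w

theorem isAntichainOn_iff_isAntichain {r : α → α → Prop} {A : Finset α} :
    IsAntichainOn r A ↔ IsAntichain r (A : Set α) :=
  ⟨fun h a ha b hb hab => (h a ha b hb hab).1,
    fun h _ ha _ hb hab => ⟨h ha hb hab, h hb ha hab.symm⟩⟩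

theorem WidthLE.mono [LE α] {S T : Set α} (hT : WidthLE T w) (h : S ⊆ T) : WidthLE S w :=
  fun A hA => hT A (hA.trans h)

theorem WidthLE.dual [LE α] {S : Set α} (hS : WidthLE S w) : WidthLE (ofDual ⁻¹' S) w :=
  fun A hA hanti => hS A hA hanti.to_dual

theorem widthLE_singleton [LE α] (v : α) : WidthLE {v} 1 :=
  fun A hA _ => Finset.card_le_card (t := {v}) <| by
    simpa only [← Finset.coe_subset, Finset.coe_singleton] using hA

variable [PartialOrder α] [Finite α] {Q : Set α}

theorem WidthLE.ncard_biUnion_le_of_monotoneOn (hQ : WidthLE Q w) {F : α → Set β}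
    (hF : MonotoneOn F Q) {b : ℕ} (hFin : ∀ x ∈ Q, (F x).Finite) (hb : ∀ x ∈ Q, (F x).ncard ≤ b) :
    (⋃ x ∈ Q, F x).ncard ≤ w * b := by
  classical
  let top : Finset α := {x | Maximal (· ∈ Q) x}.toFinite.toFinset
  have htopQ : ∀ x ∈ top, x ∈ Q := fun x hx => ((Set.Finite.mem_toFinset _).1 hx).prop
  have htop_card : top.card ≤ w :=
    hQ top htopQ (by simpa [top] using setOfPred_maximal_antichain (· ∈ Q))
  have hcover : ⋃ x ∈ Q, F x ⊆ ⋃ x ∈ top, F x := iUnion₂_subset fun x hx => by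
    obtain ⟨y, hxy, hy⟩ := Q.toFinite.exists_le_maximal hx
    exact (hF hx hy.prop hxy).trans
      (subset_biUnion_of_mem (u := F) (show y ∈ (top : Set α) by simpa [top] using hy))
  calc (⋃ x ∈ Q, F x).ncard
      ≤ (⋃ x ∈ top, F x).ncard :=
        ncard_le_ncard hcover (top.finite_toSet.biUnion fun x hx => hFin x (htopQ x hx))
    _ ≤ ∑ x ∈ top, (F x).ncard := Finset.set_ncard_biUnion_le top F
    _ ≤ top.card * b := Finset.sum_le_card_nsmul _ _ _ fun x hx => hb x (htopQ x hx)
    _ ≤ w * b := Nat.mul_le_mul_right b htop_card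

theorem WidthLE.ncard_biUnion_le_of_antitoneOn (hQ : WidthLE Q w) {F : α → Set β}
    (hF : AntitoneOn F Q) {b : ℕ} (hFin : ∀ x ∈ Q, (F x).Finite) (hb : ∀ x ∈ Q, (F x).ncard ≤ b) :
    (⋃ x ∈ Q, F x).ncard ≤ w * b :=
  hQ.dual.ncard_biUnion_le_of_monotoneOn (F := F ∘ ofDual) hF.dual_left hFin hb

end Width

section Ladder

theorem LFree.of_relEmbedding {r : α → α → Prop} {s : β → β → Prop} (hs : LFree s m) (f : r ↪r s) :
    LFree r m := fun ⟨x, y, hx, hy, hxy, hyx⟩ =>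
  have transfer {a b : α} (h : r a b ∧ a ≠ b) : s (f a) (f b) ∧ f a ≠ f b :=
    ⟨f.map_rel_iff.2 h.1, f.injective.ne h.2⟩
  hs ⟨f ∘ x, f ∘ y, fun i j hij => transfer (hx i j hij), fun i j hij => transfer (hy i j hij),
    fun i => transfer (hxy i), fun i j hij => by simpa [f.map_rel_iff] using hyx i j hij⟩

theorem LFree.dual [LE α] (h : LFree (α := α) (· ≤ ·) m) : LFree (α := αᵒᵈ) (· ≤ ·) m :=
  fun ⟨x, y, hx, hy, hxy, hyx⟩ => h ⟨fun i => ofDual (y i.rev), fun i => ofDual (x i.rev),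
    fun _ _ hij => (hy _ _ (Fin.rev_lt_rev.2 hij)).imp_right Ne.symm,
    fun _ _ hij => (hx _ _ (Fin.rev_lt_rev.2 hij)).imp_right Ne.symm,
    fun i => (hxy i.rev).imp_right Ne.symm,
    fun _ _ hij => hyx _ _ (Fin.rev_lt_rev.2 hij)⟩

theorem LFree.length_le_of_strictMono_of_incompRel [PartialOrder α]
    (hfree : LFree (α := α) (· ≤ ·) m) (hw : WidthLE (univ : Set α) w) {N : ℕ} {x y : Fin N → α}
    (hx : StrictMono x) (hxy : ∀ i, x i < y i)
    (hyx : ∀ i j, i < j → IncompRel (· ≤ ·) (y i) (x j)) : N ≤ (m - 1) * w := by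
  have index_le {s t : Fin N} (h : y s ≤ y t) : s ≤ t :=
    not_lt.1 fun hts => (hyx t s hts).not_ge ((hxy s).le.trans h)
  have hy : y.Injective := fun s t h => (index_le h.le).antisymm (index_le h.ge)
  have chain_length_le (l : List (Fin N)) (hl : l.Pairwise (y ⁻¹'o (· < ·))) :
      l.length ≤ m - 1 := by
    by_contra! hlen
    let idx : Fin m → Fin N := fun i => l.get (i.castLE (by omega))
    have hy_idx : StrictMono (y ∘ idx) := fun i j hij => List.pairwise_iff_get.1 hl _ _ hij
    have h_idx : StrictMono idx := fun i j hij =>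
      (index_le (hy_idx hij).le).lt_of_ne fun h => (hy_idx hij).ne (congrArg y h)
    exact hfree ⟨x ∘ idx, y ∘ idx,
      fun i j hij => ⟨(hx (h_idx hij)).le, (hx (h_idx hij)).ne⟩,
      fun i j hij => ⟨(hy_idx hij).le, (hy_idx hij).ne⟩,
      fun i => ⟨(hxy _).le, (hxy _).ne⟩, fun i j hij => hyx _ _ (h_idx hij)⟩
  obtain ⟨A, -, hA, hcard⟩ := exists_isAntichain_card_le_mul (y ⁻¹'o (· < ·)) Finset.univ
    fun l _ hl => chain_length_le l hl
  have hAw : A.card ≤ w := by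
    rw [← Finset.card_map ⟨y, hy⟩]
    refine hw _ (subset_univ _) ?_
    rw [Finset.coe_map]
    rintro _ ⟨s, hs, rfl⟩ _ ⟨t, ht, rfl⟩ hst hle
    exact hA hs ht (fun h => hst (congrArg y h)) (lt_of_le_of_ne hle hst)
  calc N = (Finset.univ : Finset (Fin N)).card := (Finset.card_fin N).symm
    _ ≤ (m - 1) * A.card := hcard
    _ ≤ (m - 1) * w := Nat.mul_le_mul_left _ hAw

end Ladder

section Greedy

/-- A Grundy coloring of the poset `α` with colors in an arbitrary ordered type `γ`: each color
class is a chain, and each element has an incomparable witness of every smaller color that is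
used. A subset `T` of a colored poset is Grundy colored when `IsGreedy (T.domRestrict g)` holds.
-/
structure IsGreedy [LE α] [LT γ] (g : α → γ) : Prop where
  le_or_ge : ∀ {u v}, g u = g v → u ≤ v ∨ v ≤ u
  exists_incompRel : ∀ {u v}, g u < g v → ∃ z, IncompRel (· ≤ ·) z v ∧ g z = g u

theorem IsGrundy.isGreedy [LE α] {n : ℕ} {g : α → ℕ} (hg : IsGrundy (· ≤ ·) n g) :
    IsGreedy g where
  le_or_ge := hg.2.2.1 _ _
  exists_incompRel {u v} huv := hg.2.2.2 v (g u) (hg.1 u).1 huv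

theorem IsGrundy.range_eq_Icc {r : α → α → Prop} {n : ℕ} {g : α → ℕ} (hg : IsGrundy r n g) :
    range g = Icc 1 n :=
  Subset.antisymm (range_subset_iff.2 hg.1) fun i hi => hg.2.1 i hi.1 hi.2

theorem IsGreedy.dual [LE α] [LT γ] {g : α → γ} (hg : IsGreedy g) : IsGreedy (g ∘ ofDual) where
  le_or_ge huv := (hg.le_or_ge huv).symm
  exists_incompRel huv := (hg.exists_incompRel huv).imp fun _ => And.imp_left IncompRel.symm

theorem IsGreedy.domRestrict_singleton [Preorder α] [Preorder γ] (g : α → γ) (v : α) :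
    IsGreedy (({v} : Set α).domRestrict g) where
  le_or_ge {a b} _ := Or.inl (Subsingleton.elim a b).le
  exists_incompRel {a b} hab := absurd (congrArg _ (Subsingleton.elim a b)) hab.ne

theorem IsGreedy.exists_isGrundy [LE α] [Finite α] [LinearOrder γ] {g : α → γ} (hg : IsGreedy g) :
    ∃ c : α → ℕ, IsGrundy (· ≤ ·) (range g).ncard c := by
  have : Fintype (range g) := Fintype.ofFinite _
  let e : Fin (range g).ncard ≃o range g :=
    Fintype.orderIsoFinOfCardEq _ Nat.card_eq_fintype_card.symm
  let rank (v : α) : Fin (range g).ncard := e.symm ⟨g v, mem_range_self v⟩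
  have rank_lt_rank {u v : α} : rank u < rank v ↔ g u < g v := e.symm.lt_iff_lt
  have rank_inj {u v : α} : rank u = rank v ↔ g u = g v :=
    e.symm.injective.eq_iff.trans Subtype.mk_eq_mk
  have exists_rank_eq {i : ℕ} (h₁ : 1 ≤ i) (h₂ : i ≤ (range g).ncard) :
      ∃ v, (rank v : ℕ) + 1 = i := by
    obtain ⟨v, hv⟩ := (e ⟨i - 1, by omega⟩).2
    have hrank : rank v = ⟨i - 1, by omega⟩ := e.symm_apply_eq.2 (Subtype.ext hv)
    exact ⟨v, by rw [hrank]; exact Nat.sub_add_cancel h₁⟩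
  refine ⟨fun v => rank v + 1, fun v => ⟨Nat.succ_pos _, (rank v).2⟩, fun i => exists_rank_eq,
    fun u v huv => hg.le_or_ge (rank_inj.1 (Fin.ext (Nat.succ_injective huv))),
    fun v i hi hiv => ?_⟩
  obtain ⟨u, rfl⟩ := exists_rank_eq hi (hiv.le.trans (rank v).2)
  obtain ⟨z, hz, hzu⟩ := hg.exists_incompRel (rank_lt_rank.1 (Nat.lt_of_succ_lt_succ hiv))
  exact ⟨z, hz, congrArg (fun r : Fin _ => (r : ℕ) + 1) (rank_inj.2 hzu)⟩

/-- The color `i` is smaller than `j`, and some element of `S` of color `j` is `r`-above all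
elements of `S` of color `i`. It is used with `r` the order of the poset and with the reverse
order. -/
def Dominates [LT γ] (r : α → α → Prop) (g : α → γ) (S : Set α) (i j : γ) : Prop :=
  i < j ∧ ∃ x ∈ S, g x = j ∧ ∀ u ∈ S, g u = i → r u x

instance [Preorder γ] (r : α → α → Prop) [IsTrans α r] (g : α → γ) (S : Set α) :
    IsTrans γ (Dominates r g S) where
  trans _ _ _ := fun ⟨hij, x, hx, hgx, hux⟩ ⟨hjk, y, hy, hgy, huy⟩ =>
    ⟨hij.trans hjk, y, hy, hgy, fun u hu hgu => _root_.trans (hux u hu hgu) (huy x hx hgx)⟩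

variable [PartialOrder α] [Preorder γ] {g : α → γ} {S : Set α}

theorem IsGreedy.domRestrict_inter_preimage (hg : IsGreedy g) (hS : S.OrdConnected) {K : Set γ}
    (hbelow : ∀ i ∈ K, ∀ j ∈ K, i ∈ g '' S → ¬ Dominates (· ≤ ·) g S i j)
    (habove : ∀ i ∈ K, ∀ j ∈ K, i ∈ g '' S → ¬ Dominates (· ≥ ·) g S i j) :
    IsGreedy ((S ∩ g ⁻¹' K).domRestrict g) where
  le_or_ge huv := hg.le_or_ge huv
  exists_incompRel := by
    rintro ⟨u, hu, hgu⟩ ⟨x, hx, hgx⟩ (hux : g u < g x)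
    suffices ∃ z ∈ S, IncompRel (· ≤ ·) z x ∧ g z = g u by
      obtain ⟨z, hz, hzx, hgz⟩ := this
      exact ⟨⟨z, hz, show g z ∈ K from hgz ▸ hgu⟩, hzx, hgz⟩
    obtain ⟨a, ha, hga, hax⟩ : ∃ a ∈ S, g a = g u ∧ ¬ a ≤ x := by
      by_contra! h
      exact hbelow _ hgu _ hgx (mem_image_of_mem g hu) ⟨hux, x, hx, rfl, h⟩
    obtain ⟨b, hb, hgb, hxb⟩ : ∃ b ∈ S, g b = g u ∧ ¬ x ≤ b := by
      by_contra! h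
      exact habove _ hgu _ hgx (mem_image_of_mem g hu) ⟨hux, x, hx, rfl, h⟩
    by_cases hxa : x ≤ a
    · by_cases hbx : b ≤ x
      · -- The witness is comparable to `b ≤ x ≤ a` but not to `x`, so it lies between `b` and `a`.
        obtain ⟨z, hzx, hgz⟩ := hg.exists_incompRel hux
        have hbz : b ≤ z := (hg.le_or_ge (hgb.trans hgz.symm)).resolve_right
          fun h => hzx.not_le (h.trans hbx)
        have hza : z ≤ a := (hg.le_or_ge (hgz.trans hga.symm)).resolve_right
          fun h => hzx.not_ge (hxa.trans h)
        exact ⟨z, hS.out hb ha ⟨hbz, hza⟩, hzx, hgz⟩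
      · exact ⟨b, hb, ⟨hbx, hxb⟩, hgb⟩
    · exact ⟨a, ha, ⟨hax, hxa⟩, hga⟩

theorem exists_strictMono_of_dominates {k : ℕ} {c : Fin (k + 1) → γ} (hc : c 0 ∈ g '' S)
    (hdom : ∀ i j, i < j → Dominates (· ≤ ·) g S (c i) (c j)) :
    ∃ x : Fin (k + 1) → α, StrictMono x ∧ (∀ i, x i ∈ S) ∧ (∀ i, g (x i) = c i) ∧
      ∀ i j, i < j → ∀ u ∈ S, g u = c i → u ≤ x j := by
  have htop (j : Fin (k + 1)) :
      ∃ x ∈ S, g x = c j ∧ ∀ i < j, ∀ u ∈ S, g u = c i → u ≤ x := by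
    cases j using Fin.cases with
    | zero =>
      obtain ⟨x, hx, hgx⟩ := hc
      exact ⟨x, hx, hgx, fun i hi => absurd hi (Fin.not_lt_zero i)⟩
    | succ j =>
      obtain ⟨-, x, hx, hgx, hux⟩ := hdom j.castSucc j.succ Fin.castSucc_lt_succ
      refine ⟨x, hx, hgx, fun i hi u hu hgu => ?_⟩
      rcases (Fin.le_castSucc_iff.2 hi).eq_or_lt with rfl | hij
      · exact hux u hu hgu
      · obtain ⟨-, y, hy, hgy, huy⟩ := hdom i j.castSucc hij
        exact (huy u hu hgu).trans (hux y hy hgy)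
  choose x hxS hgx hux using htop
  refine ⟨x, fun i j hij => (hux j i hij _ (hxS i) (hgx i)).lt_of_ne fun h => ?_, hxS, hgx,
    fun i j => hux j i⟩
  exact (hdom i j hij).1.ne (by rw [← hgx i, ← hgx j, h])

theorem IsGreedy.length_le_of_dominates (hg : IsGreedy g) (hfree : LFree (α := α) (· ≤ ·) m)
    (hw : WidthLE (univ : Set α) w) (hS : S.OrdConnected) {k : ℕ} {c : Fin (k + 1) → γ}
    (hc : c 0 ∈ g '' S) (hdom : ∀ i j, i < j → Dominates (· ≤ ·) g S (c i) (c j)) :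
    k ≤ (m - 1) * w := by
  obtain ⟨x, hx, hxS, hgx, hux⟩ := exists_strictMono_of_dominates hc hdom
  have hwitness (i : Fin k) : ∃ y, IncompRel (· ≤ ·) y (x i.succ) ∧ g y = g (x i.castSucc) :=
    hg.exists_incompRel (by rw [hgx, hgx]; exact (hdom _ _ Fin.castSucc_lt_succ).1)
  choose y hyx hgy using hwitness
  have hyS (i : Fin k) : y i ∉ S := fun h =>
    (hyx i).not_le (hux i.castSucc i.succ Fin.castSucc_lt_succ _ h ((hgy i).trans (hgx _)))
  have hxy (i : Fin k) : x i.castSucc ≤ y i := (hg.le_or_ge (hgy i)).resolve_left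
    fun h => (hyx i).not_le (h.trans (hx Fin.castSucc_lt_succ).le)
  refine hfree.length_le_of_strictMono_of_incompRel hw (x := x ∘ Fin.castSucc) (y := y)
    (hx.comp Fin.strictMono_castSucc)
    (fun i => (hxy i).lt_of_ne fun h => hyS i (h ▸ hxS i.castSucc)) fun i j hij => ⟨?_, ?_⟩
  · exact fun h => hyS i (hS.out (hxS _) (hxS _) ⟨hxy i, h⟩)
  · exact fun h => (hyx i).not_ge ((hx.monotone (Fin.succ_le_castSucc_iff.2 hij)).trans h)

theorem IsGreedy.exists_not_dominates_card_le (hg : IsGreedy g) (hfree : LFree (α := α) (· ≤ ·) m)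
    (hw : WidthLE (univ : Set α) w) (hS : S.OrdConnected) {K : Finset γ} (hK : ↑K ⊆ g '' S) :
    ∃ L ⊆ K, (∀ i ∈ L, ∀ j ∈ L, ¬ Dominates (· ≤ ·) g S i j) ∧
      K.card ≤ ((m - 1) * w + 1) * L.card := by
  obtain ⟨L, hLK, hL, hcard⟩ := exists_isAntichain_card_le_mul (Dominates (· ≤ ·) g S) K
    (M := (m - 1) * w + 1) <| by
      rintro (_ | ⟨i, l⟩) hmem hl
      · exact Nat.zero_le _
      · exact Nat.succ_le_succ <| hg.length_le_of_dominates hfree hw hS (c := (i :: l).get)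
          (hK (hmem i List.mem_cons_self)) (List.pairwise_iff_get.1 hl)
  exact ⟨L, hLK, fun i hi j hj hij => hL hi hj hij.1.ne hij, hcard⟩

theorem IsGreedy.exists_subset_isGreedy_domRestrict [Finite α] (hg : IsGreedy g)
    (hfree : LFree (α := α) (· ≤ ·) m) (hw : WidthLE (univ : Set α) w) (hS : S.OrdConnected) :
    ∃ T ⊆ S, IsGreedy (T.domRestrict g) ∧
      (g '' S).ncard ≤ ((m - 1) * w + 1) ^ 2 * (g '' T).ncard := by
  let K := (g '' S).toFinite.toFinset
  have hK : ↑K = g '' S := Set.Finite.coe_toFinset _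
  obtain ⟨K₁, hK₁, hbelow, hcard₁⟩ := hg.exists_not_dominates_card_le hfree hw hS hK.subset
  have hK₁S : ↑K₁ ⊆ g '' S := (Finset.coe_subset.2 hK₁).trans hK.subset
  obtain ⟨K₂, hK₂, habove, hcard₂⟩ :=
    hg.dual.exists_not_dominates_card_le hfree.dual hw.dual hS.dual (K := K₁) hK₁S
  refine ⟨S ∩ g ⁻¹' K₂, inter_subset_left, hg.domRestrict_inter_preimage hS
    (fun i hi j hj _ => hbelow i (hK₂ hi) j (hK₂ hj)) (fun i hi j hj _ => habove i hi j hj), ?_⟩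
  have himage : g '' (S ∩ g ⁻¹' K₂) = K₂ := by
    rw [image_inter_preimage]
    exact inter_eq_right.2 ((Finset.coe_subset.2 hK₂).trans hK₁S)
  rw [himage, ← hK, ncard_coe_finset, ncard_coe_finset, sq, mul_assoc]
  exact hcard₁.trans (Nat.mul_le_mul_left _ hcard₂)

end Greedy

section Incomparable

/-- The set of elements of a poset incomparable to `v`. -/
def incompSet [LE α] (v : α) : Set α := {u | IncompRel (· ≤ ·) u v}

/-- The set of elements of a poset incomparable to `v` and above `x`. -/
def incompSetAbove [LE α] (v x : α) : Set α := {u | IncompRel (· ≤ ·) u v ∧ x ≤ u}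

theorem incompSet_toDual [LE α] (v : α) : incompSet (toDual v) = ofDual ⁻¹' incompSet v :=
  ext fun _ => and_comm

variable [PartialOrder α]

theorem ordConnected_incompSet (v : α) : (incompSet v).OrdConnected :=
  ⟨fun _ ha _ hb _ hz => ⟨fun h => ha.not_le (hz.1.trans h), fun h => hb.not_ge (h.trans hz.2)⟩⟩

theorem ordConnected_incompSetAbove (v x : α) : (incompSetAbove v x).OrdConnected :=
  (ordConnected_incompSet v).inter ordConnected_Ici

theorem monotoneOn_incompSetAbove_left (v : α) :
    MonotoneOn (fun x => incompSetAbove x v) (incompSet v) := fun _ _ _ hy hxy _ hz =>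
  ⟨⟨fun h => hy.not_ge (hz.2.trans h), fun h => hz.1.not_ge (hxy.trans h)⟩, hz.2⟩

theorem antitone_incompSetAbove (v : α) : Antitone (incompSetAbove v) :=
  fun _ _ hxy _ hz => ⟨hz.1, hxy.trans hz.2⟩

theorem widthLE_incompSet (hw : WidthLE (univ : Set α) w) (v : α) :
    WidthLE (incompSet v) (w - 1) := fun A hA hanti => by
  classical
  have hv : v ∉ A := fun h => (hA h).not_le le_rfl
  have hanti_insert : IsAntichain (· ≤ ·) ((insert v A : Finset α) : Set α) := by
    rw [Finset.coe_insert]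
    exact hanti.insert (fun a ha _ => (hA ha).not_le) fun a ha _ => (hA ha).not_ge
  have hcard := hw (insert v A) (subset_univ _) hanti_insert
  rw [Finset.card_insert_of_notMem hv] at hcard
  omega

theorem widthLE_incompSetAbove_or (hw : WidthLE (univ : Set α) w) (v x : α) :
    WidthLE (incompSetAbove v x) (w / 2) ∨ WidthLE (incompSetAbove x v) (w / 2) := by
  classical
  by_contra! h
  simp only [WidthLE, not_forall, not_le] at h
  obtain ⟨⟨A, hA, hA_anti, hA_card⟩, ⟨B, hB, hB_anti, hB_card⟩⟩ := h
  have hAB : ∀ a ∈ A, ∀ b ∈ B, IncompRel (· ≤ ·) a b := fun a ha b hb =>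
    ⟨fun h => (hB hb).1.not_ge ((hA ha).2.trans h), fun h => (hA ha).1.not_ge ((hB hb).2.trans h)⟩
  have hdisj : Disjoint A B :=
    Finset.disjoint_left.2 fun a ha hb => (hAB a ha a hb).not_le le_rfl
  have hanti : IsAntichain (· ≤ ·) ((A ∪ B : Finset α) : Set α) := by
    rw [Finset.coe_union, isAntichain_union]
    exact ⟨hA_anti, hB_anti, fun a ha b hb _ => hAB a ha b hb⟩
  have hcard := hw (A ∪ B) (subset_univ _) hanti
  rw [Finset.card_union_of_disjoint hdisj] at hcard
  omega

variable [Preorder γ] {g : α → γ}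

theorem IsGreedy.exists_mem_incompSetAbove_of_dominates (hg : IsGreedy g) {v : α} {i j : γ}
    (hi : i ∈ g '' incompSet v) (hdom : Dominates (· ≤ ·) g (incompSet v) i j) :
    ∃ x ∈ incompSet v, i ∈ g '' incompSetAbove x v ∧ j ∈ g '' incompSetAbove v x := by
  obtain ⟨u, hu, rfl⟩ := hi
  obtain ⟨hij, x, hx, rfl, hux⟩ := hdom
  obtain ⟨z, hzx, hgz⟩ := hg.exists_incompRel hij
  have huz : u ≤ z := (hg.le_or_ge hgz.symm).resolve_right
    fun h => hzx.not_le (h.trans (hux u hu rfl))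
  have hvz : v ≤ z := by
    by_contra hvz
    have hzv : ¬ z ≤ v := fun h => hu.not_le (huz.trans h)
    exact hzx.not_le (hux z ⟨hzv, hvz⟩ hgz)
  exact ⟨x, hx, ⟨z, ⟨hzx, hvz⟩, hgz⟩, ⟨x, ⟨hx, le_rfl⟩, rfl⟩⟩

theorem IsGreedy.exists_cover_dominates [Finite α] (hg : IsGreedy g)
    (hw : WidthLE (univ : Set α) w) {b : ℕ}
    (hb : ∀ S : Set α, S.OrdConnected → WidthLE S (w / 2) → (g '' S).ncard ≤ b) (v : α) :
    ∃ B : Set γ, B.Finite ∧ B.ncard ≤ 2 * ((w - 1) * b) ∧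
      ∀ i ∉ B, ∀ j ∉ B, i ∈ g '' incompSet v → ¬ Dominates (· ≤ ·) g (incompSet v) i j := by
  let Q₁ := {x ∈ incompSet v | WidthLE (incompSetAbove x v) (w / 2)}
  let Q₂ := {x ∈ incompSet v | WidthLE (incompSetAbove v x) (w / 2)}
  let B₁ := ⋃ x ∈ Q₁, g '' incompSetAbove x v
  let B₂ := ⋃ x ∈ Q₂, g '' incompSetAbove v x
  have hB₁ : B₁.ncard ≤ (w - 1) * b :=
    ((widthLE_incompSet hw v).mono (sep_subset _ _)).ncard_biUnion_le_of_monotoneOn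
      (fun x hx y hy hxy => image_mono (monotoneOn_incompSetAbove_left v hx.1 hy.1 hxy))
      (fun _ _ => toFinite _) fun x hx => hb _ (ordConnected_incompSetAbove x v) hx.2
  have hB₂ : B₂.ncard ≤ (w - 1) * b :=
    ((widthLE_incompSet hw v).mono (sep_subset _ _)).ncard_biUnion_le_of_antitoneOn
      (fun _ _ _ _ hxy => image_mono (antitone_incompSetAbove v hxy))
      (fun _ _ => toFinite _) fun x hx => hb _ (ordConnected_incompSetAbove v x) hx.2
  have hB_finite : (B₁ ∪ B₂).Finite :=
    (Q₁.toFinite.biUnion fun _ _ => toFinite _).union (Q₂.toFinite.biUnion fun _ _ => toFinite _)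
  refine ⟨B₁ ∪ B₂, hB_finite, by linarith [ncard_union_le B₁ B₂], fun i hi j hj hiv hdom => ?_⟩
  obtain ⟨x, hx, hix, hjx⟩ := hg.exists_mem_incompSetAbove_of_dominates hiv hdom
  rcases widthLE_incompSetAbove_or hw v x with hsmall | hsmall
  · exact hj (Or.inr (mem_biUnion (⟨hx, hsmall⟩ : x ∈ Q₂) hjx))
  · exact hi (Or.inl (mem_biUnion (⟨hx, hsmall⟩ : x ∈ Q₁) hix))

theorem IsGreedy.exists_subset_incompSet [Finite α] (hg : IsGreedy g)
    (hw : WidthLE (univ : Set α) w) {b : ℕ}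
    (hb : ∀ S : Set α, S.OrdConnected → WidthLE S (w / 2) → (g '' S).ncard ≤ b) (v : α) :
    ∃ T ⊆ incompSet v, IsGreedy (T.domRestrict g) ∧
      (g '' incompSet v).ncard ≤ (g '' T).ncard + 4 * ((w - 1) * b) := by
  obtain ⟨B₁, hB₁_finite, hB₁_card, hB₁⟩ := hg.exists_cover_dominates hw hb v
  obtain ⟨B₂, hB₂_finite, hB₂_card, hB₂⟩ := hg.dual.exists_cover_dominates hw.dual
    (fun S hS hSw => hb (toDual ⁻¹' S) hS.dual hSw.dual) (toDual v)
  rw [incompSet_toDual] at hB₂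
  refine ⟨incompSet v ∩ g ⁻¹' (B₁ ∪ B₂)ᶜ, inter_subset_left,
    hg.domRestrict_inter_preimage (ordConnected_incompSet v)
      (fun i hi j hj => hB₁ i (fun h => hi (Or.inl h)) j fun h => hj (Or.inl h))
      (fun i hi j hj => hB₂ i (fun h => hi (Or.inr h)) j fun h => hj (Or.inr h)), ?_⟩
  rw [image_inter_preimage, ← sdiff_eq]
  linarith [ncard_le_ncard_sdiff_add_ncard (g '' incompSet v) (B₁ ∪ B₂)
    (hB₁_finite.union hB₂_finite), ncard_union_le B₁ B₂]

end Incomparable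

section RecursionStep

theorem LFree.pos {r : α → α → Prop} (h : LFree r m) : 0 < m := by
  refine Nat.pos_of_ne_zero ?_
  rintro rfl
  exact h ⟨Fin.elim0, Fin.elim0, by simp [IsLadderIn]⟩

theorem four_mul_pred_mul_sq_add_one_le (hm : 1 ≤ m) (hw : 2 ≤ w) {t : ℕ} (ht : 1 ≤ t) :
    4 * ((w - 1) * (((m - 1) * w + 1) ^ 2 * t)) + 1 ≤ m ^ 2 * w ^ 4 * t := by
  obtain ⟨a, rfl⟩ := Nat.exists_eq_add_of_le' hm
  have hpred : 4 * (w - 1) ≤ w ^ 2 := by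
    obtain ⟨b, rfl⟩ := Nat.exists_eq_add_of_le' (one_le_two.trans hw)
    simpa using four_mul_le_sq_add b 1
  have hsq : (a * w + 1) ^ 2 + 1 ≤ ((a + 1) * w) ^ 2 := by
    have hle : a * w + 2 ≤ (a + 1) * w := by linarith
    exact le_trans (by ring_nf; omega) (Nat.pow_le_pow_left hle 2)
  rw [Nat.add_sub_cancel]
  calc 4 * ((w - 1) * ((a * w + 1) ^ 2 * t)) + 1
      = 4 * (w - 1) * ((a * w + 1) ^ 2 * t) + 1 := by ring
    _ ≤ w ^ 2 * ((a * w + 1) ^ 2 * t) + w ^ 2 * t :=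
      add_le_add (Nat.mul_le_mul_right _ hpred) (Nat.mul_pos (by positivity) ht)
    _ = w ^ 2 * (((a * w + 1) ^ 2 + 1) * t) := by ring
    _ ≤ w ^ 2 * (((a + 1) * w) ^ 2 * t) := by gcongr
    _ = (a + 1) ^ 2 * w ^ 4 * t := by ring

theorem IsGrundy.of_relIso {r : α → α → Prop} {s : β → β → Prop} {n : ℕ} {c : β → ℕ}
    (hc : IsGrundy s n c) (f : r ≃r s) : IsGrundy r n (c ∘ f) := by
  obtain ⟨hbound, hsurj, hchain, hwitness⟩ := hc
  refine ⟨fun v => hbound (f v), fun i h₁ h₂ => ?_, fun u v huv => ?_, fun v i h₁ h₂ => ?_⟩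
  · obtain ⟨b, rfl⟩ := hsurj i h₁ h₂
    exact ⟨f.symm b, congrArg c (f.apply_symm_apply b)⟩
  · exact (hchain _ _ huv).imp f.map_rel_iff.1 f.map_rel_iff.1
  · obtain ⟨b, hb, rfl⟩ := hwitness (f v) i h₁ h₂
    obtain ⟨u, rfl⟩ := f.surjective b
    exact ⟨u, hb.imp (mt f.map_rel_iff.2) (mt f.map_rel_iff.2), rfl⟩

variable [PartialOrder α] [Finite α] [LinearOrder γ] {g : α → γ}

theorem IsGreedy.ncard_range_le_of_forall_le (hg : IsGreedy g) {v : α} (hv : ∀ u, g u ≤ g v) :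
    (range g).ncard ≤ (g '' incompSet v).ncard + 1 := by
  have hsub : range g ⊆ insert (g v) (g '' incompSet v) := by
    rintro _ ⟨u, rfl⟩
    exact (hv u).eq_or_lt.imp id fun huv => hg.exists_incompRel huv
  exact (ncard_le_ncard hsub ((toFinite _).insert _)).trans (ncard_insert_le _ _)

theorem IsGreedy.exists_recursion_step [Nonempty α] (hg : IsGreedy g)
    (hfree : LFree (α := α) (· ≤ ·) m) (hw : WidthLE (univ : Set α) w) (hw₂ : 2 ≤ w) :
    ∃ T₁ T₂ : Set α, IsGreedy (T₁.domRestrict g) ∧ WidthLE T₁ (w / 2) ∧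
      IsGreedy (T₂.domRestrict g) ∧ WidthLE T₂ (w - 1) ∧
      (range g).ncard ≤ m ^ 2 * w ^ 4 * (g '' T₁).ncard + (g '' T₂).ncard := by
  obtain ⟨v, hv⟩ := Finite.exists_max g
  let candidates := {T : Set α | IsGreedy (T.domRestrict g) ∧ WidthLE T (w / 2)}
  have hv_mem : {v} ∈ candidates :=
    ⟨IsGreedy.domRestrict_singleton g v,
      fun A hA h => (widthLE_singleton v A hA h).trans (by omega)⟩
  obtain ⟨T₁, ⟨hT₁, hT₁_width⟩, hmax⟩ :=
    exists_max_image candidates (fun T => (g '' T).ncard) (toFinite _) ⟨_, hv_mem⟩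
  have hT₁_pos : 1 ≤ (g '' T₁).ncard := by simpa using hmax _ hv_mem
  have hsmall (S : Set α) (hS : S.OrdConnected) (hSw : WidthLE S (w / 2)) :
      (g '' S).ncard ≤ ((m - 1) * w + 1) ^ 2 * (g '' T₁).ncard := by
    obtain ⟨T, hTS, hT, hcard⟩ := hg.exists_subset_isGreedy_domRestrict hfree hw hS
    exact hcard.trans (Nat.mul_le_mul_left _ (hmax T ⟨hT, hSw.mono hTS⟩))
  obtain ⟨T₂, hT₂v, hT₂, hcard⟩ := hg.exists_subset_incompSet hw hsmall v
  refine ⟨T₁, T₂, hT₁, hT₁_width, hT₂, (widthLE_incompSet hw v).mono hT₂v, ?_⟩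
  linarith [hg.ncard_range_le_of_forall_le hv,
    four_mul_pred_mul_sq_add_one_le hfree.pos hw₂ hT₁_pos]

theorem IsGreedy.exists_fin_isGrundy {T : Set α} (hT : IsGreedy (T.domRestrict g))
    (hfree : LFree (α := α) (· ≤ ·) m) (hw : WidthLE T w) :
    ∃ (N : ℕ) (le : Fin N → Fin N → Prop) (c : Fin N → ℕ), IsPartialOrder (Fin N) le ∧
      LFree le m ∧ (∀ A : Finset (Fin N), IsAntichainOn le A → A.card ≤ w) ∧
      IsGrundy le (g '' T).ncard c := by
  obtain ⟨N, ⟨e⟩⟩ := Finite.exists_equiv_fin T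
  obtain ⟨c, hc⟩ := hT.exists_isGrundy
  rw [range_domRestrict] at hc
  let iso := RelIso.preimage e.symm (· ≤ · : T → T → Prop)
  let f : (e.symm ⁻¹'o (· ≤ ·)) ↪r (· ≤ · : α → α → Prop) :=
    iso.toRelEmbedding.trans (OrderEmbedding.subtype (· ∈ T))
  refine ⟨N, _, c ∘ iso, f.isPartialOrder, hfree.of_relEmbedding f, fun A hA => ?_,
    hc.of_relIso iso⟩
  have hA_anti : IsAntichain (· ≤ ·) (f '' A) :=
    (isAntichainOn_iff_isAntichain.1 hA).image_relEmbedding f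
  rw [← Finset.card_map f.toEmbedding]
  refine hw _ ?_ (by rwa [Finset.coe_map])
  rw [Finset.coe_map]
  rintro _ ⟨a, -, rfl⟩
  exact (e.symm a).2

end RecursionStep

/-- a recursion step: if an `L_m`-free poset of width `w ≥ 2`
has an `n`-Grundy coloring, then there are `L_m`-free posets of width at most
`⌊w/2⌋` and `w−1` with `n₁`- and `n₂`-Grundy colorings such that
`n ≤ m²·w⁴·n₁ + n₂`. -/
theorem stmt_11 {α : Type} [Fintype α] (le : α → α → Prop)
    (hle : IsPartialOrder α le) (m w n : ℕ) (hm : 2 ≤ m) (hw : 2 ≤ w)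
    (hfree : LFree le m) (hwidth : IsWidth le w)
    (g : α → ℕ) (hg : IsGrundy le n g) :
    ∃ (N₁ N₂ : ℕ) (le₁ : Fin N₁ → Fin N₁ → Prop)
      (le₂ : Fin N₂ → Fin N₂ → Prop) (n₁ n₂ : ℕ)
      (g₁ : Fin N₁ → ℕ) (g₂ : Fin N₂ → ℕ),
      IsPartialOrder (Fin N₁) le₁ ∧ LFree le₁ m ∧
      (∀ S : Finset (Fin N₁), IsAntichainOn le₁ S → S.card ≤ w / 2) ∧
      IsGrundy le₁ n₁ g₁ ∧
      IsPartialOrder (Fin N₂) le₂ ∧ LFree le₂ m ∧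
      (∀ S : Finset (Fin N₂), IsAntichainOn le₂ S → S.card ≤ w - 1) ∧
      IsGrundy le₂ n₂ g₂ ∧
      n ≤ m ^ 2 * w ^ 4 * n₁ + n₂ := by
  let _ : PartialOrder α :=
    { le := le, le_refl := hle.refl, le_trans := hle.trans, le_antisymm := hle.antisymm }
  obtain ⟨⟨S, -, hS⟩, hwidth⟩ := hwidth
  obtain ⟨a, -⟩ : S.Nonempty := Finset.card_pos.1 (by omega)
  have : Nonempty α := ⟨a⟩
  have hwidthLE : WidthLE (univ : Set α) w := fun A _ hA =>
    hwidth A (isAntichainOn_iff_isAntichain.2 hA)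
  obtain ⟨T₁, T₂, hT₁, hT₁_width, hT₂, hT₂_width, hn⟩ :=
    hg.isGreedy.exists_recursion_step hfree hwidthLE hw
  obtain ⟨N₁, le₁, g₁, hle₁, hfree₁, hwidth₁, hg₁⟩ := hT₁.exists_fin_isGrundy hfree hT₁_width
  obtain ⟨N₂, le₂, g₂, hle₂, hfree₂, hwidth₂, hg₂⟩ := hT₂.exists_fin_isGrundy hfree hT₂_width
  have hrange : (range g).ncard = n := by simp [hg.range_eq_Icc]
  exact ⟨N₁, N₂, le₁, le₂, _, _, g₁, g₂, hle₁, hfree₁, hwidth₁, hg₁, hle₂, hfree₂, hwidth₂, hg₂,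
    hrange ▸ hn⟩
end
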